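/- Let n ≥ 2 be an integer and 0 < λ ≤ Λ real constants, and set M₁ := 8·(36n)^{max{1, (n−1)Λ/λ − 1}}. Let Ω ⊆ ℝⁿ be an open set containing the closed ball of radius 2√n centered at 0, and let v : Ω → ℝ be a continuous viscosity supersolution of M⁻_{λ,Λ}(D²v) ≤ 0 in Ω. Suppose L : ℝⁿ → ℝ is an affine function and x* ∈ Q₃ are such that v(x) ≥ L(x) − (1/(16n))|x−x*|² for all x ∈ Ω, with equality at x = x*. Then inf over the closure of Q_{1/(12√n)} of (v − L + 1) is at most M₁. -/

import Mathlib

open MeasureTheory Metric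
open scoped InnerProductSpace ENNReal

noncomputable section

abbrev Euc (n : ℕ) := EuclideanSpace ℝ (Fin n)

/-- Loewner order -/
def matLE {n : ℕ} (A B : Matrix (Fin n) (Fin n) ℝ) : Prop := (B - A).PosSemidef

/-- Pucci minimal operator -/
def pucciInf {n : ℕ} (lam Lam : ℝ) (M : Matrix (Fin n) (Fin n) ℝ) : ℝ :=
  sInf {t : ℝ | ∃ A : Matrix (Fin n) (Fin n) ℝ,
    A.IsSymm ∧ matLE (lam • 1) A ∧ matLE A (Lam • 1) ∧ t = (A * M).trace}

/-- Hessian matrix via second iterated Fréchet derivative -/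
def hessianMatrix {n : ℕ} (φ : Euc n → ℝ) (x : Euc n) : Matrix (Fin n) (Fin n) ℝ :=
  Matrix.of fun i j =>
    iteratedFDeriv ℝ 2 φ x ![EuclideanSpace.single i 1, EuclideanSpace.single j 1]

/-- viscosity supersolution of M⁻(D²v) ≤ 0 -/
def ViscSupersol {n : ℕ} (lam Lam : ℝ) (Ω : Set (Euc n)) (v : Euc n → ℝ) : Prop :=
  ∀ x₀ ∈ Ω, ∀ φ : Euc n → ℝ,
    (∃ U : Set (Euc n), IsOpen U ∧ x₀ ∈ U ∧ ContDiffOn ℝ 2 φ U) →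
    IsLocalMinOn (fun x => v x - φ x) Ω x₀ →
    pucciInf lam Lam (hessianMatrix φ x₀) ≤ 0

def Gm {n : ℕ} (K : ℝ) (v : Euc n → ℝ) (Ω : Set (Euc n)) : Set (Euc n) :=
  {xb | xb ∈ Ω ∧ ∃ p : Euc n, ∀ x ∈ Ω, v x ≥ v xb + ⟪p, x - xb⟫_ℝ - K / 2 * ‖x - xb‖ ^ 2}

def Am {n : ℕ} (K : ℝ) (v : Euc n → ℝ) (Ω : Set (Euc n)) : Set (Euc n) := Ω \ Gm K v Ω

/-- open cube of side r centered at x -/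
def cube {n : ℕ} (r : ℝ) (x : Euc n) : Set (Euc n) := {y | ∀ i, |y i - x i| < r / 2}


/-!
Subtracting `L - 1` turns `v` into a nonnegative supersolution `w` on the ball of radius `2√n` with
`w xs = 1`. The eigenvalues of `D²|x|^(-α)` are `α (α + 1) |x|^(-α - 2)` once and
`-α |x|^(-α - 2)` with multiplicity `n - 1`, so `|x|^(-α)` is a subsolution off the origin as soon
as `(n - 1) Λ ≤ (α + 1) λ`. Comparing `w` with it on the annulus between radii `r` and `R` gives
`(min over B_r of w) * ((r / ρ)^α - (r / R)^α) ≤ w xs` whenever `|xs| ≤ ρ`. Now take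
`r = 1 / (24√n)`, `ρ = 3√n / 2` and `R = 2√n`: then `r / ρ = 1 / (36n)`, `ρ / R = 3 / 4`, and the
bracket is at least `(36n)^(-α) / 4`.
-/

section RadialHessian

open scoped Topology

variable {n : ℕ}

lemma hessianMatrix_apply_of_hasFDerivAt {φ : Euc n → ℝ} {φ' : Euc n → Euc n →L[ℝ] ℝ}
    {φ'' : Euc n →L[ℝ] Euc n →L[ℝ] ℝ} {x : Euc n} (hφ : ∀ᶠ y in 𝓝 x, HasFDerivAt φ (φ' y) y)
    (hφ' : HasFDerivAt φ' φ'' x) (i j : Fin n) :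
    hessianMatrix φ x i j = φ'' (EuclideanSpace.single i 1) (EuclideanSpace.single j 1) := by
  have hfderiv : fderiv ℝ φ =ᶠ[𝓝 x] φ' := hφ.mono fun y hy => hy.fderiv
  simp [hessianMatrix, iteratedFDeriv_two_apply, (hφ'.congr_of_eventuallyEq hfderiv).fderiv]

lemma hessianMatrix_comp_norm_sq {g g' : ℝ → ℝ} {g'' : ℝ} {x : Euc n}
    (hg : ∀ᶠ t in 𝓝 (‖x‖ ^ 2), HasDerivAt g (g' t) t) (hg' : HasDerivAt g' g'' (‖x‖ ^ 2)) :
    hessianMatrix (fun y => g (‖y‖ ^ 2)) x =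
      (4 * g'') • Matrix.vecMulVec (x : Fin n → ℝ) x + (2 * g' (‖x‖ ^ 2)) • 1 := by
  have hsq (y : Euc n) : HasFDerivAt (fun y : Euc n => ‖y‖ ^ 2) (2 • innerSL ℝ y) y :=
    (hasStrictFDerivAt_norm_sq y).hasFDerivAt
  have hφ : ∀ᶠ y in 𝓝 x,
      HasFDerivAt (fun y => g (‖y‖ ^ 2)) (g' (‖y‖ ^ 2) • 2 • innerSL ℝ y) y :=
    ((hsq x).continuousAt.eventually hg).mono fun y hy => hy.comp_hasFDerivAt y (hsq y)
  have hφ' := (hg'.comp_hasFDerivAt x (hsq x)).smul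
    ((innerSL ℝ : Euc n →L[ℝ] Euc n →L[ℝ] ℝ).hasFDerivAt.const_smul (2 : ℕ))
  ext i j
  rw [hessianMatrix_apply_of_hasFDerivAt hφ hφ']
  have hcoord (u : Euc n) (j : Fin n) : innerSL ℝ u (EuclideanSpace.single j 1) = u j := by
    simp [innerSL_apply_apply, EuclideanSpace.inner_single_right]
  simp only [Function.comp_apply, Pi.smul_apply, add_apply, smul_apply,
    ContinuousLinearMap.smulRight_apply, hcoord, nsmul_eq_mul, Nat.cast_ofNat, smul_eq_mul,
    PiLp.single_apply, eq_comm (a := j), Matrix.add_apply, Matrix.smul_apply,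
    Matrix.vecMulVec_apply, Matrix.one_apply]
  split_ifs <;> ring

lemma hessianMatrix_add_affine {φ : Euc n → ℝ} {x : Euc n} (hφ : ContDiffAt ℝ 2 φ x)
    (p : Euc n) (b : ℝ) : hessianMatrix (fun y => φ y + (⟪p, y⟫_ℝ + b)) x = hessianMatrix φ x := by
  have hφ' : ∀ᶠ y in 𝓝 x, HasFDerivAt φ (fderiv ℝ φ y) y :=
    (hφ.eventually (by simp)).mono fun y hy => (hy.differentiableAt (by simp)).hasFDerivAt
  have hφ'' : HasFDerivAt (fderiv ℝ φ) (fderiv ℝ (fderiv ℝ φ) x) x :=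
    ((hφ.fderiv_right (m := 1) le_rfl).differentiableAt (by simp)).hasFDerivAt
  ext i j
  rw [hessianMatrix_apply_of_hasFDerivAt hφ' hφ'']
  exact hessianMatrix_apply_of_hasFDerivAt
    (hφ'.mono fun y hy => hy.add ((innerSL ℝ p).hasFDerivAt.add_const b))
    (hφ''.add_const (innerSL ℝ p)) i j

end RadialHessian

section Pucci

open Matrix

lemma dotProduct_mulVec_le_of_posSemidef {ι : Type*} [Fintype ι] {B : Matrix ι ι ℝ}
    (hB : B.PosSemidef) (x : ι → ℝ) : x ⬝ᵥ (B *ᵥ x) ≤ (x ⬝ᵥ x) * B.trace := by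
  classical
  open scoped MatrixOrder in
  obtain ⟨C, rfl⟩ := CStarAlgebra.nonneg_iff_eq_star_mul_self.mp hB.nonneg
  have htrace : (Cᵀ * C).trace = ∑ i, ∑ j, C i j ^ 2 := by
    rw [trace_mul_comm]
    simp only [trace, diag_apply, mul_apply, transpose_apply, sq]
  rw [show star C = Cᵀ from rfl, htrace, ← mulVec_mulVec, dotProduct_mulVec, vecMul_transpose,
    Finset.mul_sum]
  simp only [dotProduct, mulVec, ← sq]
  refine Finset.sum_le_sum fun i _ => ?_
  rw [mul_comm]
  exact Finset.sum_mul_sq_le_sq_mul_sq _ _ _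

variable {n : ℕ} {lam Lam : ℝ}

lemma le_pucciInf (hLam : lam ≤ Lam) {M : Matrix (Fin n) (Fin n) ℝ} {t : ℝ}
    (h : ∀ A, matLE (lam • 1) A → matLE A (Lam • 1) → t ≤ (A * M).trace) :
    t ≤ pucciInf lam Lam M := by
  refine le_csInf ⟨_, lam • 1, by simp [IsSymm], ?_, ?_, rfl⟩ ?_
  · simp [matLE, PosSemidef.zero]
  · rw [matLE, ← sub_smul]
    exact PosSemidef.one.smul (sub_nonneg.mpr hLam)
  · rintro _ ⟨A, -, hlow, hup, rfl⟩
    exact h A hlow hup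

section Ellipticity

variable {A : Matrix (Fin n) (Fin n) ℝ}

lemma smul_dotProduct_self_le_of_matLE (h : matLE (lam • 1) A) (x : Fin n → ℝ) :
    lam * (x ⬝ᵥ x) ≤ x ⬝ᵥ (A *ᵥ x) := by
  simpa [sub_mulVec, smul_mulVec] using PosSemidef.dotProduct_mulVec_nonneg h x

lemma mul_le_trace_of_matLE (h : matLE (lam • 1) A) : n * lam ≤ A.trace := by
  simpa [mul_comm] using PosSemidef.trace_nonneg h

lemma dotProduct_self_mul_trace_le_of_matLE (h : matLE A (Lam • 1)) (x : Fin n → ℝ) :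
    (x ⬝ᵥ x) * A.trace ≤ x ⬝ᵥ (A *ᵥ x) + (n - 1) * Lam * (x ⬝ᵥ x) := by
  have := dotProduct_mulVec_le_of_posSemidef h x
  simp only [sub_mulVec, smul_mulVec, one_mulVec, dotProduct_sub, dotProduct_smul, trace_sub,
    trace_smul, trace_one, Fintype.card_fin, smul_eq_mul] at this
  linarith

end Ellipticity

lemma le_pucciInf_smul_vecMulVec_sub_add (hLam : lam ≤ Lam) {α μ κ : ℝ}
    (hα : (n - 1) * Lam ≤ (α + 1) * lam) (hα' : -1 ≤ α) (hμ : 0 ≤ μ) (hκ : 0 ≤ κ) (x : Fin n → ℝ) :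
    κ * (n * lam) ≤ pucciInf lam Lam
      (μ • ((α + 2) • vecMulVec x x - (x ⬝ᵥ x) • 1) + κ • 1) := by
  refine le_pucciInf hLam fun A hlow hup => ?_
  have hxx : 0 ≤ x ⬝ᵥ x := by simpa using dotProduct_star_self_nonneg x
  have hQ : 0 ≤ (α + 2) * (x ⬝ᵥ (A *ᵥ x)) - (x ⬝ᵥ x) * A.trace := by
    have h₁ := mul_le_mul_of_nonneg_left (smul_dotProduct_self_le_of_matLE hlow x)
      (show 0 ≤ α + 1 by linarith)
    have h₂ := mul_le_mul_of_nonneg_right hα hxx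
    linarith [dotProduct_self_mul_trace_le_of_matLE hup x]
  calc κ * (n * lam) ≤ κ * A.trace := by gcongr; exact mul_le_trace_of_matLE hlow
    _ ≤ μ * ((α + 2) * (x ⬝ᵥ (A *ᵥ x)) - (x ⬝ᵥ x) * A.trace) + κ * A.trace :=
      le_add_of_nonneg_left (mul_nonneg hμ hQ)
    _ = _ := by
      simp only [Matrix.mul_add, Matrix.mul_sub, Matrix.mul_smul, Matrix.mul_one, trace_add,
        trace_sub, trace_smul, mul_vecMulVec, trace_vecMulVec, smul_eq_mul,
        dotProduct_comm (A *ᵥ x)]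

end Pucci

section Supersolution

variable {n : ℕ} {lam Lam : ℝ} {Ω : Set (Euc n)} {v : Euc n → ℝ}

lemma ViscSupersol.mono (h : ViscSupersol lam Lam Ω v) {U : Set (Euc n)} (hU : IsOpen U)
    (hUΩ : U ⊆ Ω) : ViscSupersol lam Lam U v := fun x hx φ hφ hmin =>
  h x (hUΩ hx) φ hφ ((hmin.isLocalMin (hU.mem_nhds hx)).on Ω)

lemma ViscSupersol.sub_affine (h : ViscSupersol lam Lam Ω v) (p : Euc n) (b : ℝ) :
    ViscSupersol lam Lam Ω (fun x => v x - (⟪p, x⟫_ℝ + b)) := by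
  rintro x hx φ ⟨U, hU, hxU, hφ⟩ hmin
  rw [← hessianMatrix_add_affine (hφ.contDiffAt (hU.mem_nhds hxU)) p b]
  refine h x hx _ ⟨U, hU, hxU, hφ.add ((innerSL ℝ p).contDiff.add contDiff_const).contDiffOn⟩ ?_
  simpa only [sub_sub, add_comm, add_left_comm] using hmin

lemma ViscSupersol.exists_mem_frontier_isMinOn {K : Set (Euc n)} {φ : Euc n → ℝ}
    (h : ViscSupersol lam Lam (interior K) v) (hK : IsCompact K) (hne : K.Nonempty)
    (hcont : ContinuousOn (fun x => v x - φ x) K) (hφ : ContDiffOn ℝ 2 φ (interior K))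
    (hstrict : ∀ x ∈ interior K, 0 < pucciInf lam Lam (hessianMatrix φ x)) :
    ∃ x ∈ frontier K, IsMinOn (fun x => v x - φ x) K x := by
  obtain ⟨x, hx, hmin⟩ := hK.exists_isMinOn hne hcont
  refine ⟨x, ⟨subset_closure hx, fun hxint => ?_⟩, hmin⟩
  exact (hstrict x hxint).not_ge <| h x hxint φ ⟨_, isOpen_interior, hxint, hφ⟩
    (hmin.on_subset interior_subset).localize

end Supersolution

section PowerBarrier

open scoped Topology

variable {n : ℕ} {lam Lam c α e a : ℝ}

/-- The radial barrier `c |x|^(-α) + e |x|² + a`. A small quadratic coefficient `e > 0` makes it a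
strict subsolution away from the origin. -/
def powerBarrier (c α e a : ℝ) (x : Euc n) : ℝ := c * ‖x‖ ^ (-α) + e * ‖x‖ ^ 2 + a

lemma powerBarrier_eq_norm_sq (x : Euc n) :
    powerBarrier c α e a x = c * (‖x‖ ^ 2) ^ (-α / 2) + e * ‖x‖ ^ 2 + a := by
  rw [powerBarrier, ← Real.rpow_natCast_mul (norm_nonneg x), Nat.cast_ofNat,
    mul_div_cancel₀ _ two_ne_zero]

lemma contDiffOn_powerBarrier {k : WithTop ℕ∞} :
    ContDiffOn ℝ k (powerBarrier c α e a : Euc n → ℝ) {0}ᶜ := by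
  unfold powerBarrier
  intro x (hx : x ≠ 0)
  have hnorm := (contDiffAt_norm ℝ hx (n := k)).rpow_const_of_ne (p := -α) (norm_ne_zero_iff.mpr hx)
  have hsq : ContDiffAt ℝ k (fun y : Euc n => ‖y‖ ^ 2) x := (contDiff_norm_sq ℝ).contDiffAt
  exact (((contDiffAt_const.mul hnorm).add (contDiffAt_const.mul hsq)).add
    contDiffAt_const).contDiffWithinAt

lemma continuousOn_powerBarrier : ContinuousOn (powerBarrier c α e a : Euc n → ℝ) {0}ᶜ :=
  (contDiffOn_powerBarrier (k := 0)).continuousOn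

lemma hessianMatrix_powerBarrier {x : Euc n} (hx : x ≠ 0) :
    hessianMatrix (powerBarrier c α e a) x =
      (c * α * (‖x‖ ^ 2) ^ (-α / 2 - 2)) • ((α + 2) • Matrix.vecMulVec (x : Fin n → ℝ) x -
        ((x : Fin n → ℝ) ⬝ᵥ x) • 1) + (2 * e) • 1 := by
  have hpos : 0 < ‖x‖ ^ 2 := by positivity
  have hpow {t : ℝ} (ht : 0 < t) (s : ℝ) : HasDerivAt (fun t => t ^ s) (s * t ^ (s - 1)) t :=
    Real.hasDerivAt_rpow_const (Or.inl ht.ne')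
  have hg : ∀ᶠ t in 𝓝 (‖x‖ ^ 2), HasDerivAt (fun t => c * t ^ (-α / 2) + e * t + a)
      (c * (-α / 2 * t ^ (-α / 2 - 1)) + e * 1) t :=
    (lt_mem_nhds hpos).mono fun t ht =>
      (((hpow ht _).const_mul c).add ((hasDerivAt_id t).const_mul e)).add_const a
  have hg' := (((hpow hpos (-α / 2 - 1)).const_mul (-α / 2)).const_mul c).add_const (e * 1)
  rw [funext powerBarrier_eq_norm_sq, hessianMatrix_comp_norm_sq hg hg']
  have hdot : (x : Fin n → ℝ) ⬝ᵥ x = ‖x‖ ^ 2 := by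
    rw [EuclideanSpace.real_norm_sq_eq]
    simp only [dotProduct, sq]
  have hexp : (‖x‖ ^ 2) ^ (-α / 2 - 1) = ‖x‖ ^ 2 * (‖x‖ ^ 2) ^ (-α / 2 - 2) := by
    rw [mul_comm, ← Real.rpow_add_one hpos.ne']
    ring_nf
  rw [hdot, hexp, show -α / 2 - 1 - 1 = -α / 2 - 2 by ring]
  module

lemma pucciInf_hessianMatrix_powerBarrier_pos (hlam : 0 < lam) (hLam : lam ≤ Lam) (hc : 0 ≤ c)
    (hα : 0 ≤ α) (hαn : (n - 1) * Lam ≤ (α + 1) * lam) (he : 0 < e) {x : Euc n} (hx : x ≠ 0) :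
    0 < pucciInf lam Lam (hessianMatrix (powerBarrier c α e a) x) := by
  have hn : n ≠ 0 := by
    rintro rfl
    exact hx (Subsingleton.elim x 0)
  rw [hessianMatrix_powerBarrier hx]
  exact (show 0 < 2 * e * (n * lam) by positivity).trans_le <|
    le_pucciInf_smul_vecMulVec_sub_add hLam hαn (by linarith) (by positivity) (by positivity) _

end PowerBarrier

section Annulus

lemma frontier_closedBall_sdiff_ball_subset {X : Type*} [PseudoMetricSpace X] (x : X) (r R : ℝ) :
    frontier (closedBall x R \ ball x r) ⊆ sphere x R ∪ sphere x r := by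
  rw [Set.sdiff_eq]
  refine (frontier_inter_subset _ _).trans (Set.union_subset_union ?_ ?_)
  · exact Set.inter_subset_left.trans frontier_closedBall_subset_sphere
  · rw [frontier_compl]
    exact Set.inter_subset_right.trans frontier_ball_subset_sphere

lemma interior_closedBall_sdiff_ball {E : Type*} [NormedAddCommGroup E] [NormedSpace ℝ E] (x : E)
    {r R : ℝ} (hr : r ≠ 0) (hR : R ≠ 0) :
    interior (closedBall x R \ ball x r) = ball x R \ closedBall x r := by
  rw [Set.sdiff_eq, interior_inter, interior_compl, interior_closedBall x hR, closure_ball x hr,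
    Set.sdiff_eq]

variable {n : ℕ} {lam Lam c α a r R : ℝ} {w : Euc n → ℝ}

/-- The unperturbed barrier is only a weak subsolution, so we compare with `e > 0` and let
`e → 0`. -/
lemma ViscSupersol.mul_rpow_norm_add_le (hlam : 0 < lam) (hLam : lam ≤ Lam) (hα : 0 ≤ α)
    (hαn : (n - 1) * Lam ≤ (α + 1) * lam) (hc : 0 ≤ c) (hr : 0 < r)
    (h : ViscSupersol lam Lam (ball 0 R \ closedBall 0 r) w)
    (hw : ContinuousOn w (closedBall 0 R \ ball 0 r))
    (hbd : ∀ y ∈ sphere 0 R ∪ sphere 0 r, c * ‖y‖ ^ (-α) + a ≤ w y) {x : Euc n}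
    (hx : x ∈ closedBall 0 R \ ball 0 r) : c * ‖x‖ ^ (-α) + a ≤ w x := by
  have hrx : r ≤ ‖x‖ := by simpa using hx.2
  have hxR : ‖x‖ ≤ R := by simpa using hx.1
  have hR : 0 < R := by linarith
  have hint := interior_closedBall_sdiff_ball (0 : Euc n) hr.ne' hR.ne'
  have hK₀ : closedBall (0 : Euc n) R \ ball 0 r ⊆ {0}ᶜ := by
    rintro y ⟨-, hy⟩ rfl
    exact hy (mem_ball_self hr)
  refine le_of_forall_pos_le_add fun ε hε => ?_
  obtain ⟨e, he, heR⟩ : ∃ e, 0 < e ∧ e * R ^ 2 = ε :=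
    ⟨ε / R ^ 2, by positivity, div_mul_cancel₀ ε (by positivity)⟩
  obtain ⟨y, hy, hmin⟩ := ViscSupersol.exists_mem_frontier_isMinOn (hint ▸ h)
    ((isCompact_closedBall 0 R).diff isOpen_ball) ⟨x, hx⟩
    (hw.sub (continuousOn_powerBarrier.mono hK₀))
    (contDiffOn_powerBarrier.mono (interior_subset.trans hK₀))
    fun z hz => pucciInf_hessianMatrix_powerBarrier_pos hlam hLam hc hα hαn he
      (hK₀ (interior_subset hz))
  have hbarrier := hbd y (frontier_closedBall_sdiff_ball_subset 0 r R hy)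
  have hyR : ‖y‖ ≤ R := by
    simpa using ((isClosed_closedBall.sdiff isOpen_ball).frontier_subset hy).1
  have hey : e * ‖y‖ ^ 2 ≤ ε := by
    rw [← heR]
    gcongr
  have hex : 0 ≤ e * ‖x‖ ^ 2 := by positivity
  have hxy := hmin hx
  simp only [Set.mem_ofPred_eq, powerBarrier] at hxy
  linarith

lemma ViscSupersol.mul_div_rpow_sub_le (hlam : 0 < lam) (hLam : lam ≤ Lam) (hα : 0 ≤ α)
    (hαn : (n - 1) * Lam ≤ (α + 1) * lam) (hr : 0 < r)
    (h : ViscSupersol lam Lam (ball 0 R \ closedBall 0 r) w)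
    (hw : ContinuousOn w (closedBall 0 R \ ball 0 r)) {M : ℝ} (hM : 0 ≤ M)
    (hwR : ∀ y ∈ sphere 0 R, 0 ≤ w y) (hwr : ∀ y ∈ sphere 0 r, M ≤ w y) {x : Euc n}
    (hx : x ∈ closedBall 0 R \ ball 0 r) : M * ((r / ‖x‖) ^ α - (r / R) ^ α) ≤ w x := by
  have hrx : r ≤ ‖x‖ := by simpa using hx.2
  have hxR : ‖x‖ ≤ R := by simpa using hx.1
  have hR : 0 < R := by linarith
  have hdiv {s : ℝ} (hs : 0 ≤ s) : M * (r / s) ^ α = M * r ^ α * s ^ (-α) := by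
    rw [Real.div_rpow hr.le hs, Real.rpow_neg hs, div_eq_mul_inv, mul_assoc]
  rw [mul_sub, hdiv (norm_nonneg x), sub_eq_add_neg]
  refine h.mul_rpow_norm_add_le hlam hLam hα hαn (by positivity) hr hw ?_ hx
  rintro y (hy | hy)
  all_goals rw [← hdiv (norm_nonneg y), mem_sphere_zero_iff_norm.mp hy]
  · simpa using hwR y hy
  · rw [div_self hr.ne', Real.one_rpow, mul_one]
    have : 0 ≤ M * (r / R) ^ α := by positivity
    linarith [hwr y hy]

lemma ViscSupersol.exists_mem_closedBall_mul_le (hlam : 0 < lam) (hLam : lam ≤ Lam) (hα : 0 ≤ α)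
    (hαn : (n - 1) * Lam ≤ (α + 1) * lam) (hr : 0 < r) {ρ : ℝ} (hrρ : r ≤ ρ) (hρR : ρ ≤ R)
    (h : ViscSupersol lam Lam (ball 0 R) w) (hw : ContinuousOn w (closedBall 0 R))
    (hnonneg : ∀ y ∈ closedBall 0 R, 0 ≤ w y) {x : Euc n} (hx : x ∈ closedBall 0 ρ) :
    ∃ y ∈ closedBall 0 r, w y * ((r / ρ) ^ α - (r / R) ^ α) ≤ w x := by
  have hρ : 0 < ρ := hr.trans_le hrρ
  have hR : 0 < R := hρ.trans_le hρR
  by_cases hxr : x ∈ closedBall 0 r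
  · refine ⟨x, hxr, mul_le_of_le_one_right (hnonneg x (closedBall_subset_closedBall hρR hx)) ?_⟩
    have hle : (r / ρ) ^ α ≤ 1 := Real.rpow_le_one (by positivity) (div_le_one_of_le₀ hrρ hρ.le) hα
    have hnn : 0 ≤ (r / R) ^ α := by positivity
    linarith
  · have hrR : closedBall (0 : Euc n) r ⊆ closedBall 0 R :=
      closedBall_subset_closedBall (hrρ.trans hρR)
    obtain ⟨y, hy, hmin⟩ := (isCompact_closedBall (0 : Euc n) r).exists_isMinOn
      ⟨0, mem_closedBall_self hr.le⟩ (hw.mono hrR)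
    refine ⟨y, hy, ?_⟩
    have hrx : r < ‖x‖ := by simpa using hxr
    have hxρ : ‖x‖ ≤ ρ := by simpa using hx
    calc w y * ((r / ρ) ^ α - (r / R) ^ α) ≤ w y * ((r / ‖x‖) ^ α - (r / R) ^ α) := by
          have hwy := hnonneg y (hrR hy)
          have hx₀ := hr.trans hrx
          gcongr
      _ ≤ w x := ViscSupersol.mul_div_rpow_sub_le hlam hLam hα hαn hr
          (h.mono (isOpen_ball.sdiff isClosed_closedBall) Set.sdiff_subset)
          (hw.mono Set.sdiff_subset) (hnonneg y (hrR hy))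
          (fun z hz => hnonneg z (sphere_subset_closedBall hz))
          (fun z hz => hmin (sphere_subset_closedBall hz))
          ⟨closedBall_subset_closedBall hρR hx, by simpa using hrx.le⟩

end Annulus

section Localization

lemma cube_subset_closedBall {n : ℕ} (r : ℝ) (x : Euc n) :
    cube r x ⊆ closedBall x (Real.sqrt n * (r / 2)) := by
  intro y hy
  rcases n.eq_zero_or_pos with rfl | hn
  · simp [Subsingleton.elim y x]
  have hr : 0 ≤ r / 2 := (abs_nonneg _).trans (hy ⟨0, hn⟩).le
  refine mem_closedBall_iff_norm.mpr (abs_le_of_sq_le_sq' ?_ (by positivity)).2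
  calc ‖y - x‖ ^ 2 = ∑ i, |y i - x i| ^ 2 := by
        simp only [EuclideanSpace.real_norm_sq_eq, PiLp.sub_apply, sq_abs]
    _ ≤ ∑ _i : Fin n, (r / 2) ^ 2 := by
        gcongr with i
        exact (hy i).le
    _ = (Real.sqrt n * (r / 2)) ^ 2 := by
        rw [mul_pow, Real.sq_sqrt n.cast_nonneg]
        simp

lemma closedBall_subset_closure_cube {n : ℕ} {r : ℝ} (hr : r ≠ 0) (x : Euc n) :
    closedBall x (r / 2) ⊆ closure (cube r x) := by
  rw [← closure_ball x (div_ne_zero hr two_ne_zero)]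
  refine closure_mono fun y hy i => ?_
  exact (PiLp.norm_apply_le (y - x) i).trans_lt (mem_ball_iff_norm.mp hy)

lemma closure_cube_subset_closedBall_two_mul_sqrt {n : ℕ} (hn : n ≠ 0) :
    closure (cube (1 / (12 * Real.sqrt n)) 0) ⊆ closedBall (0 : Euc n) (2 * Real.sqrt n) := by
  have hq : 1 ≤ Real.sqrt n :=
    Real.one_le_sqrt.mpr (by exact_mod_cast Nat.one_le_iff_ne_zero.mpr hn)
  refine closure_minimal ((cube_subset_closedBall _ 0).trans
    (closedBall_subset_closedBall ?_)) isClosed_closedBall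
  calc Real.sqrt n * (1 / (12 * Real.sqrt n) / 2) = 1 / 24 := by
        field_simp
        norm_num
    _ ≤ 2 * Real.sqrt n := by linarith

lemma rpow_div_four_le_rpow_sub_rpow {s α : ℝ} (hs : 0 ≤ s) (hα : 1 ≤ α) :
    s ^ α / 4 ≤ s ^ α - (3 / 4 * s) ^ α := by
  have hpow : (3 / 4 : ℝ) ^ α ≤ 3 / 4 :=
    Real.rpow_le_self_of_le_one (by norm_num) (by norm_num) hα
  rw [Real.mul_rpow (by norm_num) hs]
  nlinarith [Real.rpow_nonneg hs α]

variable {n : ℕ} {lam Lam : ℝ}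

lemma ViscSupersol.exists_mem_closedBall_le (hn : n ≠ 0) (hlam : 0 < lam) (hLam : lam ≤ Lam)
    {α : ℝ} (hα : 1 ≤ α) (hαn : (n - 1) * Lam ≤ (α + 1) * lam) {w : Euc n → ℝ}
    (h : ViscSupersol lam Lam (ball 0 (2 * Real.sqrt n)) w)
    (hw : ContinuousOn w (closedBall 0 (2 * Real.sqrt n)))
    (hnonneg : ∀ y ∈ closedBall 0 (2 * Real.sqrt n), 0 ≤ w y) {x : Euc n}
    (hx : x ∈ closedBall 0 (3 / 2 * Real.sqrt n)) :
    ∃ y ∈ closedBall 0 (1 / (24 * Real.sqrt n)), w y ≤ 4 * (36 * (n : ℝ)) ^ α * w x := by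
  have hn' : (1 : ℝ) ≤ n := by exact_mod_cast Nat.one_le_iff_ne_zero.mpr hn
  set q := Real.sqrt n
  have hqq : q * q = n := Real.mul_self_sqrt n.cast_nonneg
  have hq : 1 ≤ q := Real.one_le_sqrt.mpr hn'
  have hrρ : 1 / (24 * q) ≤ 3 / 2 * q := by
    rw [div_le_iff₀ (by positivity)]
    nlinarith
  obtain ⟨y, hy, hyx⟩ := h.exists_mem_closedBall_mul_le hlam hLam (by linarith) hαn
    (by positivity) hrρ (by linarith) hw hnonneg hx
  refine ⟨y, hy, ?_⟩
  have hρ : 1 / (24 * q) / (3 / 2 * q) = (36 * (n : ℝ))⁻¹ := by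
    rw [← hqq]
    field_simp
    norm_num
  have hR : 1 / (24 * q) / (2 * q) = 3 / 4 * (36 * (n : ℝ))⁻¹ := by
    rw [← hqq]
    field_simp
    norm_num
  rw [hρ, hR] at hyx
  have hwy : 0 ≤ w y :=
    hnonneg y (closedBall_subset_closedBall (hrρ.trans (by linarith)) hy)
  have hmain : w y * ((36 * (n : ℝ)) ^ α)⁻¹ / 4 ≤ w x := by
    rw [← Real.inv_rpow (by positivity), mul_div_assoc]
    exact (mul_le_mul_of_nonneg_left
      (rpow_div_four_le_rpow_sub_rpow (by positivity) hα) hwy).trans hyx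
  rw [div_le_iff₀ (by norm_num), mul_inv_le_iff₀ (by positivity)] at hmain
  linarith

lemma one_div_mul_norm_sub_sq_le_one {E : Type*} [SeminormedAddCommGroup E] {m : ℝ} (hm : 0 < m)
    {x y : E} (hx : x ∈ closedBall 0 (2 * Real.sqrt m))
    (hy : y ∈ closedBall 0 (3 / 2 * Real.sqrt m)) :
    1 / (16 * m) * ‖x - y‖ ^ 2 ≤ 1 := by
  have hxy : ‖x - y‖ ≤ 4 * Real.sqrt m := by
    have := Real.sqrt_nonneg m
    linarith [norm_sub_le x y, mem_closedBall_zero_iff.mp hx, mem_closedBall_zero_iff.mp hy]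
  rw [one_div_mul_eq_div, div_le_one (by positivity)]
  calc ‖x - y‖ ^ 2 ≤ (4 * Real.sqrt m) ^ 2 := by gcongr
    _ = 16 * m := by rw [mul_pow, Real.sq_sqrt hm.le]; norm_num

lemma ViscSupersol.sInf_image_closure_cube_le (hn : n ≠ 0) (hlam : 0 < lam) (hLam : lam ≤ Lam)
    {α : ℝ} (hα : 1 ≤ α) (hαn : (n - 1) * Lam ≤ (α + 1) * lam) {w : Euc n → ℝ}
    (h : ViscSupersol lam Lam (ball 0 (2 * Real.sqrt n)) w)
    (hw : ContinuousOn w (closedBall 0 (2 * Real.sqrt n)))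
    (hnonneg : ∀ y ∈ closedBall 0 (2 * Real.sqrt n), 0 ≤ w y) {x : Euc n}
    (hx : x ∈ closedBall 0 (3 / 2 * Real.sqrt n)) :
    sInf (w '' closure (cube (1 / (12 * Real.sqrt n)) 0)) ≤ 4 * (36 * (n : ℝ)) ^ α * w x := by
  obtain ⟨y, hy, hyx⟩ := h.exists_mem_closedBall_le hn hlam hLam hα hαn hw hnonneg hx
  have hside : 1 / (12 * Real.sqrt n) / 2 = 1 / (24 * Real.sqrt n) := by
    rw [div_div]
    ring_nf
  have hycube : y ∈ closure (cube (1 / (12 * Real.sqrt n)) 0) :=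
    closedBall_subset_closure_cube (by positivity) 0 (hside ▸ hy)
  refine (csInf_le ⟨0, ?_⟩ (Set.mem_image_of_mem w hycube)).trans hyx
  rintro _ ⟨z, hz, rfl⟩
  exact hnonneg z (closure_cube_subset_closedBall_two_mul_sqrt hn hz)

end Localization

theorem stmt_7_general (n : ℕ) (hn : n ≠ 0) (lam Lam : ℝ) (hlam : 0 < lam) (hLam : lam ≤ Lam)
    (v : Euc n → ℝ) (hv : ContinuousOn v (closedBall 0 (2 * Real.sqrt n)))
    (hsuper : ViscSupersol lam Lam (ball 0 (2 * Real.sqrt n)) v)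
    (L : Euc n → ℝ) (hL : ∃ p : Euc n, ∃ b : ℝ, ∀ x, L x = ⟪p, x⟫_ℝ + b)
    (xs : Euc n) (hxs : xs ∈ cube 3 0)
    (htouch : ∀ x ∈ closedBall 0 (2 * Real.sqrt n), v x ≥ L x - 1 / (16 * n) * ‖x - xs‖ ^ 2)
    (heq : v xs = L xs) :
    sInf ((fun x => v x - L x + 1) '' closure (cube (1 / (12 * Real.sqrt n)) 0)) ≤
      8 * (36 * (n : ℝ)) ^ (max (1 : ℝ) (((n : ℝ) - 1) * Lam / lam - 1)) := by
  obtain ⟨p, b, hL⟩ := hL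
  have hn' : (0 : ℝ) < n := by positivity
  set α := max (1 : ℝ) (((n : ℝ) - 1) * Lam / lam - 1)
  set w : Euc n → ℝ := fun x => v x - L x + 1
  have hαn : ((n : ℝ) - 1) * Lam ≤ (α + 1) * lam := by
    rw [← div_le_iff₀ hlam, ← sub_le_iff_le_add]
    exact le_max_right _ _
  have hw_eq : w = fun x => v x - (⟪p, x⟫_ℝ + (b - 1)) := by
    funext x
    simp only [w, hL]
    ring
  have hxs' : xs ∈ closedBall 0 (3 / 2 * Real.sqrt n) :=
    closedBall_subset_closedBall (by linarith) (cube_subset_closedBall 3 0 hxs)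
  have hnonneg : ∀ y ∈ closedBall 0 (2 * Real.sqrt n), 0 ≤ w y := fun y hy => by
    have hLv :=
      (sub_le_sub_left (one_div_mul_norm_sub_sq_le_one hn' hy hxs') (L y)).trans (htouch y hy)
    simp only [w]
    linarith
  have hsInf := ViscSupersol.sInf_image_closure_cube_le hn hlam hLam (le_max_left _ _) hαn
    (hw_eq ▸ hsuper.sub_affine p (b - 1)) (hw_eq ▸ hv.sub (by fun_prop)) hnonneg hxs'
  have hwxs : w xs = 1 := by simp [w, heq]
  rw [hwxs, mul_one] at hsInf
  exact hsInf.trans (by gcongr; norm_num)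

/-- localization lemma, part (i): the infimum of v − L + 1 over the closed
cube of side 1/(12√n) is at most M₁ = 8·(36n)^{max{1,(n−1)Λ/λ−1}}. -/
theorem stmt_7 (n : ℕ) (hn : 2 ≤ n) (lam Lam : ℝ) (hlam : 0 < lam) (hLam : lam ≤ Lam)
    (Ω : Set (Euc n)) (hΩ : IsOpen Ω) (hB : closedBall 0 (2 * Real.sqrt n) ⊆ Ω)
    (v : Euc n → ℝ) (hv : ContinuousOn v Ω) (hsuper : ViscSupersol lam Lam Ω v)
    (L : Euc n → ℝ) (hL : ∃ p : Euc n, ∃ b : ℝ, ∀ x, L x = ⟪p, x⟫_ℝ + b)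
    (xs : Euc n) (hxs : xs ∈ cube 3 0)
    (htouch : ∀ x ∈ Ω, v x ≥ L x - 1 / (16 * n) * ‖x - xs‖ ^ 2)
    (heq : v xs = L xs) :
    sInf ((fun x => v x - L x + 1) '' closure (cube (1 / (12 * Real.sqrt n)) 0)) ≤
      8 * (36 * (n : ℝ)) ^ (max (1 : ℝ) (((n : ℝ) - 1) * Lam / lam - 1)) := by
  exact stmt_7_general n (by lia) lam Lam hlam hLam v (hv.mono hB)
    (hsuper.mono isOpen_ball (ball_subset_closedBall.trans hB)) L hL xs hxs
    (fun x hx => htouch x (hB hx)) heq
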